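/- Suppose N = 1 (scalar blocks) and each A_k ∈ ℝ^M is a nonzero vector, so that L_k = ‖A_k‖². Then for every r ≥ 0 the cyclic exact BCD iterates satisfy Δ^{(r+1)} ≤ 3 · max{ Δ^{(0)}, 2 R_0² · log²(2K) · (L²/L_min + L_max²/L_min) } / (r+1), where Δ^{(r)} := f(x^{(r)}) − f*. -/

import Mathlib

open Finset

/-- Squared Euclidean norm of a vector in `ℝ^n`. -/
noncomputable def sqnorm {n : ℕ} (v : Fin n → ℝ) : ℝ := ∑ i, v i ^ 2

/-- `λ_max(AᵀA)` for `A = [A_1 ⋯ A_K]` with scalar blocks (`A_k ∈ ℝ^M`),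
characterized as the maximum of `‖Av‖²` over unit vectors `v ∈ ℝ^K`. -/
noncomputable def lamMaxS {K M : ℕ} (A : Fin K → Fin M → ℝ) : ℝ :=
  sSup {r : ℝ | ∃ v : Fin K → ℝ, sqnorm v = 1 ∧ r = sqnorm (∑ k, v k • A k)}

/-- Maximum of a finite family of reals indexed by `Fin K`, `K ≥ 1`. -/
noncomputable def maxOf {K : ℕ} (hK : 1 ≤ K) (P : Fin K → ℝ) : ℝ :=
  Finset.univ.sup' (Finset.univ_nonempty_iff.mpr ⟨⟨0, hK⟩⟩) P

/-- Minimum of a finite family of reals indexed by `Fin K`, `K ≥ 1`. -/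
noncomputable def minOf {K : ℕ} (hK : 1 ≤ K) (P : Fin K → ℝ) : ℝ :=
  Finset.univ.inf' (Finset.univ_nonempty_iff.mpr ⟨⟨0, hK⟩⟩) P

/-- The smooth part `g(x) = (1/2)‖Σ_k A_k x_k − b‖²` with scalar blocks. -/
noncomputable def gs {K M : ℕ} (A : Fin K → Fin M → ℝ) (b : Fin M → ℝ)
    (x : Fin K → ℝ) : ℝ :=
  (1 / 2) * sqnorm ((∑ k, x k • A k) - b)

/-- The objective `f(x) = g(x) + Σ_k h_k(x_k)` with scalar blocks. -/
noncomputable def fs {K M : ℕ} (A : Fin K → Fin M → ℝ) (b : Fin M → ℝ)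
    (h : Fin K → ℝ → ℝ) (x : Fin K → ℝ) : ℝ :=
  gs A b x + ∑ k, h k (x k)

/-- The intermediate point of the cycle: coordinates `j < k` come from `xp`,
the remaining ones from `x`. -/
def wpt {K : ℕ} (x xp : Fin K → ℝ) (k : Fin K) : Fin K → ℝ :=
  fun j => if j < k then xp j else x j

/-- One cycle of cyclic exact BCD with scalar blocks. -/
def BCDStepS {K M : ℕ} (A : Fin K → Fin M → ℝ) (b : Fin M → ℝ)
    (h : Fin K → ℝ → ℝ) (X : Fin K → Set ℝ) (x xp : Fin K → ℝ) : Prop :=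
  ∀ k : Fin K, xp k ∈ X k ∧ ∀ t ∈ X k,
    fs A b h (Function.update (wpt x xp k) k (xp k)) ≤
      fs A b h (Function.update (wpt x xp k) k t)

/-!
Convexity of the `h_k` and optimality of each coordinate update bound `f(x⁺) - f(y)` by
`(x⁺ - y)ᵀ T (x⁺ - x)`, where `T` is the strictly upper triangular part of `AᵀA`. Halving the index
set recursively splits `T` into `⌈log₂ K⌉` layers of disjoint off-diagonal blocks of `AᵀA`. Each
layer costs only `L / 2`, because `4 pᵀGq ≤ (p + q)ᵀG(p + q)` for positive semidefinite `G`, so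
`‖T‖ ≤ L ⌈log₂ K⌉ / 2 ≤ L log (2K)`. Each coordinate update decreases `f` by at least
`L_k (x⁺_k - x_k)² / 2`, which turns this bound into `(Δ⁺)² ≤ C (Δ - Δ⁺)` with
`C = 2 R₀² log² (2K) L² / L_min`; this recursion forces `Δ` to decay like `1 / r`.
-/

section TriangularTruncation

open scoped Matrix

variable {ι : Type*} [Fintype ι] {G : Matrix ι ι ℝ} {Λ : ℝ}

lemma four_mul_dotProduct_mulVec_le (hG : G.PosSemidef)
    (hΛ : ∀ w, w ⬝ᵥ G *ᵥ w ≤ Λ * (w ⬝ᵥ w)) (p q : ι → ℝ) :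
    4 * (p ⬝ᵥ G *ᵥ q) ≤ Λ * ((p + q) ⬝ᵥ (p + q)) := by
  have hsymm : q ⬝ᵥ G *ᵥ p = p ⬝ᵥ G *ᵥ q := by
    rw [← Matrix.dotProduct_transpose_mulVec, ← Matrix.conjTranspose_eq_transpose_of_trivial,
      hG.isHermitian.eq]
  have hsub : 0 ≤ (p - q) ⬝ᵥ G *ᵥ (p - q) := by
    simpa only [star_trivial] using hG.dotProduct_mulVec_nonneg (p - q)
  have hadd := hΛ (p + q)
  simp only [Matrix.mulVec_sub, Matrix.mulVec_add, dotProduct_sub, sub_dotProduct, dotProduct_add,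
    add_dotProduct] at hsub hadd ⊢
  linarith

lemma dotProduct_self_indicator_add_indicator {s t : Finset ι} (hst : Disjoint s t) (u v : ι → ℝ) :
    ((s : Set ι).indicator u + (t : Set ι).indicator v) ⬝ᵥ
        ((s : Set ι).indicator u + (t : Set ι).indicator v) =
      (s : Set ι).indicator u ⬝ᵥ (s : Set ι).indicator u +
        (t : Set ι).indicator v ⬝ᵥ (t : Set ι).indicator v := by
  classical
  simp only [dotProduct, ← sum_add_distrib, Pi.add_apply]
  refine sum_congr rfl fun i _ => ?_
  by_cases hs : i ∈ s
  · simp [hs, disjoint_left.mp hst hs]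
  · simp [hs]

lemma indicator_dotProduct_mulVec_indicator (G : Matrix ι ι ℝ) (s t : Finset ι) (u v : ι → ℝ) :
    (s : Set ι).indicator u ⬝ᵥ G *ᵥ (t : Set ι).indicator v =
      ∑ j ∈ s, ∑ k ∈ t, u j * (G j k * v k) := by
  classical
  simp [dotProduct, Matrix.mulVec, Set.indicator_apply, mul_sum, Finset.sum_ite_mem]

variable [LinearOrder ι]

omit [Fintype ι] in
lemma exists_union_eq_of_card_le_add {s : Finset ι} {a b : ℕ} (hs : #s ≤ a + b) :
    ∃ t t', t ∪ t' = s ∧ #t ≤ a ∧ #t' ≤ b ∧ ∀ i ∈ t, ∀ j ∈ t', i < j := by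
  induction s using Finset.induction_on_max generalizing b with
  | empty => exact ⟨∅, ∅, by simp⟩
  | insert x s hx ih =>
    have hxs : x ∉ s := fun h => (hx x h).false
    cases b with
    | zero => exact ⟨insert x s, ∅, by simpa using hs⟩
    | succ b =>
      rw [card_insert_of_notMem hxs] at hs
      obtain ⟨t, t', rfl, ht, ht', hlt⟩ := ih (Nat.succ_le_succ_iff.mp hs)
      refine ⟨t, insert x t', union_insert x t t', ht,
        (card_insert_le x t').trans (Nat.succ_le_succ ht'), fun i hi j hj => ?_⟩
      rcases mem_insert.mp hj with rfl | hj
      · exact hx i (mem_union_left t' hi)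
      · exact hlt i hi j hj

/-- The strictly upper triangular part of a square matrix. -/
def strictUpper (G : Matrix ι ι ℝ) : Matrix ι ι ℝ :=
  Matrix.of fun j k => if j < k then G j k else 0

omit [Fintype ι] in
lemma strictUpper_apply (G : Matrix ι ι ℝ) (j k : ι) :
    strictUpper G j k = if j < k then G j k else 0 := rfl

lemma indicator_dotProduct_strictUpper_mulVec_eq_zero {s t : Finset ι}
    (hts : ∀ i ∈ s, ∀ j ∈ t, ¬ i < j) (G : Matrix ι ι ℝ) (u v : ι → ℝ) :
    (s : Set ι).indicator u ⬝ᵥ strictUpper G *ᵥ (t : Set ι).indicator v = 0 := by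
  rw [indicator_dotProduct_mulVec_indicator]
  refine sum_eq_zero fun j hj => sum_eq_zero fun k hk => ?_
  rw [strictUpper_apply, if_neg (hts j hj k hk), zero_mul, mul_zero]

lemma indicator_dotProduct_strictUpper_mulVec_of_lt {s t : Finset ι}
    (hst : ∀ i ∈ s, ∀ j ∈ t, i < j) (G : Matrix ι ι ℝ) (u v : ι → ℝ) :
    (s : Set ι).indicator u ⬝ᵥ strictUpper G *ᵥ (t : Set ι).indicator v =
      (s : Set ι).indicator u ⬝ᵥ G *ᵥ (t : Set ι).indicator v := by
  simp only [indicator_dotProduct_mulVec_indicator]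
  refine sum_congr rfl fun j hj => sum_congr rfl fun k hk => ?_
  rw [strictUpper_apply, if_pos (hst j hj k hk)]

lemma indicator_dotProduct_strictUpper_mulVec_le (hG : G.PosSemidef)
    (hΛ : ∀ w, w ⬝ᵥ G *ᵥ w ≤ Λ * (w ⬝ᵥ w)) (u v : ι → ℝ) {m : ℕ} {s : Finset ι}
    (hs : #s ≤ 2 ^ m) :
    (s : Set ι).indicator u ⬝ᵥ strictUpper G *ᵥ (s : Set ι).indicator v ≤
      m * Λ / 4 * ((s : Set ι).indicator u ⬝ᵥ (s : Set ι).indicator u +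
        (s : Set ι).indicator v ⬝ᵥ (s : Set ι).indicator v) := by
  induction m generalizing s with
  | zero =>
    rw [indicator_dotProduct_strictUpper_mulVec_eq_zero fun j hj k hk =>
      (card_le_one.mp hs j hj k hk).not_lt]
    simp
  | succ m ih =>
    obtain ⟨t, t', rfl, ht, ht', hlt⟩ :=
      exists_union_eq_of_card_le_add (a := 2 ^ m) (b := 2 ^ m) (by rwa [← mul_two, ← pow_succ])
    have hdisj : Disjoint t t' := disjoint_left.mpr fun i hi hi' => (hlt i hi i hi').false
    have hsplit (w : ι → ℝ) : ((t ∪ t' : Finset ι) : Set ι).indicator w =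
        (t : Set ι).indicator w + (t' : Set ι).indicator w := by
      rw [coe_union, Set.indicator_union_of_disjoint (disjoint_coe.mpr hdisj)]
      rfl
    have hcross := four_mul_dotProduct_mulVec_le hG hΛ ((t : Set ι).indicator u)
      ((t' : Set ι).indicator v)
    have hnonneg (w : ι → ℝ) : 0 ≤ Λ * (w ⬝ᵥ w) := (hG.dotProduct_mulVec_nonneg w).trans (hΛ w)
    simp only [hsplit, dotProduct_self_indicator_add_indicator hdisj, Matrix.mulVec_add,
      dotProduct_add, add_dotProduct, indicator_dotProduct_strictUpper_mulVec_of_lt hlt,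
      indicator_dotProduct_strictUpper_mulVec_eq_zero fun j hj k hk => (hlt k hk j hj).not_gt]
      at hcross ⊢
    push_cast
    linarith [ih ht, ih ht', hnonneg ((t' : Set ι).indicator u),
      hnonneg ((t : Set ι).indicator v)]

theorem sq_dotProduct_strictUpper_mulVec_le (hG : G.PosSemidef)
    (hΛ : ∀ w, w ⬝ᵥ G *ᵥ w ≤ Λ * (w ⬝ᵥ w)) (u v : ι → ℝ) :
    (u ⬝ᵥ strictUpper G *ᵥ v) ^ 2 ≤
      (Nat.clog 2 (Fintype.card ι) * Λ / 2) ^ 2 * (u ⬝ᵥ u) * (v ⬝ᵥ v) := by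
  let c := Nat.clog 2 (Fintype.card ι) * Λ / 4
  have hquad (r : ℝ) : 0 ≤ c * (u ⬝ᵥ u) * (r * r) + -(u ⬝ᵥ strictUpper G *ᵥ v) * r +
      c * (v ⬝ᵥ v) := by
    have h := indicator_dotProduct_strictUpper_mulVec_le hG hΛ (r • u) v (s := univ)
      (Nat.le_pow_clog one_lt_two (Fintype.card ι))
    simp only [coe_univ, Set.indicator_univ, smul_dotProduct, dotProduct_smul, smul_eq_mul] at h
    linear_combination h
  have hdiscrim := discrim_le_zero hquad
  rw [discrim] at hdiscrim
  linear_combination hdiscrim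

end TriangularTruncation

lemma clog_two_div_two_le_log (n : ℕ) : (Nat.clog 2 n : ℝ) / 2 ≤ Real.log (2 * n) := by
  rcases eq_or_ne n 0 with rfl | hn
  · simp
  have hn1 : (1 : ℝ) ≤ n := Nat.one_le_cast.mpr (Nat.one_le_iff_ne_zero.mpr hn)
  have hceil : (Nat.clog 2 n : ℝ) < Real.logb 2 n + 1 := by
    rw [← Real.natCeil_logb_natCast]
    exact Nat.ceil_lt_add_one (Real.logb_nonneg one_lt_two hn1)
  have hlog2 : 1 / 2 ≤ Real.log 2 := by linarith [Real.log_two_gt_d9]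
  rw [Real.logb, div_add_one (by positivity), lt_div_iff₀ (by positivity)] at hceil
  calc (Nat.clog 2 n : ℝ) / 2
      = Nat.clog 2 n * (1 / 2) := by ring
    _ ≤ Nat.clog 2 n * Real.log 2 := by gcongr
    _ ≤ Real.log n + Real.log 2 := hceil.le
    _ = Real.log (2 * n) := by rw [Real.log_mul two_ne_zero (by positivity), add_comm]

lemma le_two_mul_div_of_sq_le_mul_sub {D : ℕ → ℝ} {B : ℝ} (hB : 0 ≤ B) (h0 : D 0 ≤ B)
    (hrec : ∀ r, 0 ≤ D (r + 1) → D (r + 1) ^ 2 ≤ B * (D r - D (r + 1))) (r : ℕ) :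
    D r ≤ 2 * B / (r + 2) := by
  induction r with
  | zero => simpa using h0
  | succ r ih =>
    rcases lt_or_ge (D (r + 1)) 0 with hneg | hnonneg
    · exact hneg.le.trans (by positivity)
    set q := 2 * B / ((r + 1 : ℕ) + 2) with hq
    have hq0 : 0 ≤ q := by positivity
    have hroot : 2 * B / (r + 2) * B ≤ q ^ 2 + B * q := by
      have hsub : q ^ 2 + B * q - 2 * B / (r + 2) * B =
          2 * B ^ 2 * (r + 1) / ((r + 3) ^ 2 * (r + 2)) := by
        rw [hq]
        push_cast
        field_simp
        ring
      have : 0 ≤ 2 * B ^ 2 * (r + 1) / ((r + 3) ^ 2 * (r + 2) : ℝ) := by positivity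
      linarith
    by_contra! hlt
    nlinarith [hrec r hnonneg, mul_le_mul_of_nonneg_right ih hB]

lemma nonneg_add_of_isMinOn_add {E : Type*} [AddCommGroup E] [Module ℝ E] {S : Set E}
    {φ ψ : E → ℝ} {s t : E} {φ' : ℝ} (hψ : ConvexOn ℝ S ψ) (hs : s ∈ S) (ht : t ∈ S)
    (hmin : IsMinOn (φ + ψ) S s)
    (hφ : HasDerivWithinAt (fun l : ℝ => φ (AffineMap.lineMap s t l)) φ' (Set.Ioi 0) 0) :
    0 ≤ φ' + (ψ t - ψ s) := by
  rw [hasDerivWithinAt_iff_tendsto_slope' Set.self_notMem_Ioi] at hφ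
  have hslope : ∀ᶠ l in nhdsWithin (0 : ℝ) (Set.Ioi 0),
      -(ψ t - ψ s) ≤ slope (fun l : ℝ => φ (AffineMap.lineMap s t l)) 0 l := by
    filter_upwards [Ioo_mem_nhdsGT one_pos] with l ⟨hl0, hl1⟩
    have hmem : AffineMap.lineMap s t l ∈ S := hψ.1.lineMap_mem hs ht ⟨hl0.le, hl1.le⟩
    have hle : φ s + ψ s ≤ φ (AffineMap.lineMap s t l) + ψ (AffineMap.lineMap s t l) := hmin hmem
    have hconv : ψ (AffineMap.lineMap s t l) ≤ (1 - l) * ψ s + l * ψ t := by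
      rw [AffineMap.lineMap_apply_module]
      exact hψ.2 hs ht (by linarith) hl0.le (by ring)
    rw [slope_def_field, le_div_iff₀ (by linarith), AffineMap.lineMap_apply_zero]
    linarith
  linarith [ge_of_tendsto hφ hslope]

section Quadratic

open scoped Matrix

lemma sqnorm_eq_dotProduct {n : ℕ} (v : Fin n → ℝ) : sqnorm v = v ⬝ᵥ v :=
  sum_congr rfl fun i _ => sq (v i)

lemma sqnorm_nonneg {n : ℕ} (v : Fin n → ℝ) : 0 ≤ sqnorm v :=
  sum_nonneg fun _ _ => sq_nonneg _

lemma sqnorm_pos {n : ℕ} {v : Fin n → ℝ} (hv : v ≠ 0) : 0 < sqnorm v :=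
  (sqnorm_nonneg v).lt_of_ne' fun h => hv (dotProduct_self_eq_zero.mp (sqnorm_eq_dotProduct v ▸ h))

lemma sqnorm_smul {n : ℕ} (c : ℝ) (v : Fin n → ℝ) : sqnorm (c • v) = c ^ 2 * sqnorm v := by
  simp only [sqnorm, Pi.smul_apply, smul_eq_mul, mul_pow, mul_sum]

lemma sqnorm_add {n : ℕ} (u v : Fin n → ℝ) :
    sqnorm (u + v) = sqnorm u + 2 * (u ⬝ᵥ v) + sqnorm v := by
  simp only [sqnorm_eq_dotProduct, add_dotProduct, dotProduct_add, dotProduct_comm v u]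
  ring

variable {K M : ℕ} (A : Fin K → Fin M → ℝ) (b : Fin M → ℝ)

lemma sqnorm_sum_smul_le (v : Fin K → ℝ) :
    sqnorm (∑ k, v k • A k) ≤ sqnorm v * ∑ k, sqnorm (A k) := by
  simp only [sqnorm, Finset.sum_apply, Pi.smul_apply, smul_eq_mul]
  rw [sum_comm (f := fun k i => A k i ^ 2), mul_sum]
  exact sum_le_sum fun i _ => sum_mul_sq_le_sq_mul_sq univ v fun k => A k i

lemma sqnorm_sum_smul_le_lamMaxS (v : Fin K → ℝ) :
    sqnorm (∑ k, v k • A k) ≤ lamMaxS A * sqnorm v := by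
  rcases eq_or_ne v 0 with rfl | hv
  · simp [sqnorm]
  have hpos := sqnorm_pos hv
  have hbdd : BddAbove {r : ℝ | ∃ w : Fin K → ℝ, sqnorm w = 1 ∧ r = sqnorm (∑ k, w k • A k)} := by
    refine ⟨∑ k, sqnorm (A k), ?_⟩
    rintro r ⟨w, hw, rfl⟩
    simpa only [hw, one_mul] using sqnorm_sum_smul_le A w
  set c := (Real.sqrt (sqnorm v))⁻¹ with hc
  have hc2 : c ^ 2 = (sqnorm v)⁻¹ := by rw [hc, inv_pow, Real.sq_sqrt hpos.le]
  have hunit : sqnorm (c • v) = 1 := by rw [sqnorm_smul, hc2, inv_mul_cancel₀ hpos.ne']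
  have hle : sqnorm (∑ k, (c • v) k • A k) ≤ lamMaxS A := le_csSup hbdd ⟨c • v, hunit, rfl⟩
  have hscale : ∑ k, (c • v) k • A k = c • ∑ k, v k • A k := by
    simp only [Pi.smul_apply, smul_assoc, smul_sum]
  rwa [hscale, sqnorm_smul, hc2, inv_mul_le_iff₀ hpos, mul_comm] at hle

/-- The Gram matrix of the columns `A_k`, i.e. `AᵀA` in the paper's notation (the rows of
`Matrix.of A` are the `A_k`). -/
def columnGram : Matrix (Fin K) (Fin K) ℝ := Matrix.of A * (Matrix.of A)ᵀ

lemma columnGram_posSemidef : (columnGram A).PosSemidef := by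
  simpa only [columnGram, Matrix.conjTranspose_eq_transpose_of_trivial] using
    Matrix.posSemidef_self_mul_conjTranspose (Matrix.of A)

lemma sum_smul_eq_vecMul (v : Fin K → ℝ) : ∑ k, v k • A k = v ᵥ* Matrix.of A :=
  (Matrix.vecMul_eq_sum v (Matrix.of A)).symm

lemma dotProduct_columnGram_mulVec_self (v : Fin K → ℝ) :
    v ⬝ᵥ columnGram A *ᵥ v = sqnorm (∑ k, v k • A k) := by
  rw [sum_smul_eq_vecMul, sqnorm_eq_dotProduct, columnGram, ← Matrix.mulVec_mulVec,
    Matrix.mulVec_transpose, Matrix.dotProduct_mulVec]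

lemma dotProduct_columnGram_mulVec_le (v : Fin K → ℝ) :
    v ⬝ᵥ columnGram A *ᵥ v ≤ lamMaxS A * (v ⬝ᵥ v) := by
  rw [dotProduct_columnGram_mulVec_self, ← sqnorm_eq_dotProduct]
  exact sqnorm_sum_smul_le_lamMaxS A v

/-- The gradient of `gs A b`, whose `k`-th coordinate is `⟨A_k, ∑ⱼ x_j A_j - b⟩`. -/
def gradGs (x : Fin K → ℝ) : Fin K → ℝ := Matrix.of A *ᵥ ((∑ k, x k • A k) - b)

lemma gradGs_sub (x y : Fin K → ℝ) : gradGs A b x - gradGs A b y = columnGram A *ᵥ (x - y) := by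
  simp only [gradGs, columnGram, sum_smul_eq_vecMul, ← Matrix.mulVec_sub, sub_sub_sub_cancel_right,
    ← Matrix.sub_vecMul, ← Matrix.mulVec_mulVec, Matrix.mulVec_transpose]

lemma gs_add (x v : Fin K → ℝ) :
    gs A b (x + v) = gs A b x + v ⬝ᵥ gradGs A b x + 1 / 2 * sqnorm (∑ k, v k • A k) := by
  have hresidual : (∑ k, (x + v) k • A k) - b =
      ((∑ k, x k • A k) - b) + ∑ k, v k • A k := by
    simp only [Pi.add_apply, add_smul, sum_add_distrib]
    abel
  have hlinear : v ⬝ᵥ gradGs A b x = ((∑ k, x k • A k) - b) ⬝ᵥ ∑ k, v k • A k := by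
    rw [gradGs, Matrix.dotProduct_mulVec, ← sum_smul_eq_vecMul, dotProduct_comm]
  rw [gs, hresidual, sqnorm_add, hlinear, gs]
  ring

lemma gs_sub_le (x y : Fin K → ℝ) : gs A b x - gs A b y ≤ (x - y) ⬝ᵥ gradGs A b x := by
  have hexpand := gs_add A b x (y - x)
  rw [add_sub_cancel, ← neg_sub x y, neg_dotProduct] at hexpand
  linarith [sqnorm_nonneg (∑ k, (-(x - y)) k • A k)]

lemma fs_update (h : Fin K → ℝ → ℝ) (w : Fin K → ℝ) (k : Fin K) (t : ℝ) :
    fs A b h (Function.update w k t) = fs A b h w + (t - w k) * gradGs A b w k +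
      1 / 2 * (t - w k) ^ 2 * sqnorm (A k) + (h k t - h k (w k)) := by
  have hupdate : Function.update w k t = w + Pi.single k (t - w k) := by
    ext j
    rcases eq_or_ne j k with rfl | hj <;> simp [*]
  have hsmul : ∑ j, (Pi.single k (t - w k) : Fin K → ℝ) j • A j = (t - w k) • A k := by
    rw [sum_smul_eq_vecMul, Matrix.single_vecMul]
    rfl
  have hsum : ∑ j, h j (Function.update w k t j) - ∑ j, h j (w j) = h k t - h k (w k) := by
    rw [← sum_sub_distrib, Fintype.sum_eq_single k fun j hj => by simp [hj],
      Function.update_self]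
  rw [fs, fs, eq_add_of_sub_eq hsum, hupdate, gs_add, hsmul, single_dotProduct, sqnorm_smul]
  ring

end Quadratic

section Sweep

variable {K : ℕ} (x xp : Fin K → ℝ)

/-- The point reached after the first `n` coordinate updates of a cycle from `x` to `xp`; in
contrast to `wpt`, the end point `n = K` is included. -/
def sweep (n : ℕ) : Fin K → ℝ := fun j => if j.val < n then xp j else x j

lemma sweep_zero : sweep x xp 0 = x := by
  ext j
  simp [sweep]

lemma sweep_card : sweep x xp K = xp := by
  ext j
  simp [sweep]

lemma wpt_eq_sweep (k : Fin K) : wpt x xp k = sweep x xp k := rfl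

lemma sweep_self (k : Fin K) : sweep x xp k k = x k := by
  simp [sweep]

lemma sweep_succ_self (k : Fin K) : sweep x xp (k + 1) k = xp k := by
  simp [sweep]

lemma sweep_succ (k : Fin K) :
    sweep x xp (k + 1) = Function.update (sweep x xp k) k (xp k) := by
  ext j
  rcases eq_or_ne j k with rfl | hj
  · rw [sweep_succ_self, Function.update_self]
  · have : j.val ≠ k.val := Fin.val_ne_of_ne hj
    simp only [sweep, Function.update_of_ne hj, Nat.lt_succ_iff_lt_or_eq, this, or_false]

lemma update_sweep_succ (k : Fin K) (t : ℝ) :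
    Function.update (sweep x xp (k + 1)) k t = Function.update (sweep x xp k) k t := by
  rw [sweep_succ, Function.update_idem]

lemma strictUpper_mulVec_sub (G : Matrix (Fin K) (Fin K) ℝ) (k : Fin K) :
    (strictUpper G).mulVec (xp - x) k = G.mulVec (xp - sweep x xp (k + 1)) k := by
  simp only [Matrix.mulVec, dotProduct]
  refine sum_congr rfl fun j _ => ?_
  rcases lt_or_ge k j with hkj | hjk
  · have : ¬ j.val < k.val + 1 := by omega
    simp [strictUpper_apply, sweep, hkj, this]
  · have : j.val < k.val + 1 := by omega
    simp [strictUpper_apply, sweep, hjk.not_gt, this]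

end Sweep

namespace BCDStepS

open scoped Matrix

variable {K M : ℕ} {A : Fin K → Fin M → ℝ} {b : Fin M → ℝ} {h : Fin K → ℝ → ℝ}
  {X : Fin K → Set ℝ} {x xp y : Fin K → ℝ}

lemma variational_inequality (hs : BCDStepS A b h X x xp) (k : Fin K)
    (hh : ConvexOn ℝ (X k) (h k)) {t : ℝ} (ht : t ∈ X k) :
    0 ≤ (t - xp k) * gradGs A b (sweep x xp (k + 1)) k + (h k t - h k (xp k)) := by
  set g := gradGs A b (sweep x xp (k + 1)) k
  let φ : ℝ → ℝ := fun z => (z - xp k) * g + 1 / 2 * (z - xp k) ^ 2 * sqnorm (A k)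
  have hmin : IsMinOn (φ + h k) (X k) (xp k) := fun z hz => by
    have hle := (hs k).2 z hz
    rw [wpt_eq_sweep, ← update_sweep_succ, ← update_sweep_succ, fs_update, fs_update,
      sweep_succ_self] at hle
    change φ (xp k) + h k (xp k) ≤ φ z + h k z
    simp only [φ]
    linarith
  have hderiv : HasDerivAt (fun l : ℝ => φ (AffineMap.lineMap (xp k) t l)) ((t - xp k) * g) 0 := by
    have hline : HasDerivAt (fun l : ℝ => AffineMap.lineMap (xp k) t l - xp k) (t - xp k) 0 :=
      AffineMap.hasDerivAt_lineMap.sub_const (xp k)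
    exact ((hline.mul_const g).add (((hline.pow 2).const_mul (1 / 2)).mul_const
      (sqnorm (A k)))).congr_deriv (by simp)
  exact nonneg_add_of_isMinOn_add hh (hs k).1 ht hmin hderiv.hasDerivWithinAt

lemma sum_sq_mul_sqnorm_le (hs : BCDStepS A b h X x xp) (hh : ∀ k, ConvexOn ℝ (X k) (h k))
    (hx : ∀ k, x k ∈ X k) :
    ∑ k, 1 / 2 * (xp k - x k) ^ 2 * sqnorm (A k) ≤ fs A b h x - fs A b h xp := by
  let F : ℕ → ℝ := fun n => fs A b h (sweep x xp n)
  calc ∑ k, 1 / 2 * (xp k - x k) ^ 2 * sqnorm (A k)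
      ≤ ∑ k : Fin K, (F k - F (k + 1)) := sum_le_sum fun k _ => by
        have hback : sweep x xp k = Function.update (sweep x xp (k + 1)) k (x k) := by
          rw [update_sweep_succ, ← sweep_self x xp k, Function.update_eq_self]
        have hvi := hs.variational_inequality k (hh k) (hx k)
        simp only [F]
        rw [hback, fs_update, sweep_succ_self]
        linarith
    _ = F 0 - F K := by
        rw [Fin.sum_univ_eq_sum_range (fun n => F n - F (n + 1)), sum_range_sub']
    _ = fs A b h x - fs A b h xp := by simp only [F, sweep_zero, sweep_card]

lemma fs_le (hs : BCDStepS A b h X x xp) (hh : ∀ k, ConvexOn ℝ (X k) (h k))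
    (hx : ∀ k, x k ∈ X k) : fs A b h xp ≤ fs A b h x :=
  sub_nonneg.mp <| (sum_nonneg fun k _ =>
    mul_nonneg (by positivity) (sqnorm_nonneg (A k))).trans (hs.sum_sq_mul_sqnorm_le hh hx)

lemma mul_sqnorm_sub_le (hs : BCDStepS A b h X x xp) (hh : ∀ k, ConvexOn ℝ (X k) (h k))
    (hx : ∀ k, x k ∈ X k) {μ : ℝ} (hμ : ∀ k, μ ≤ sqnorm (A k)) :
    μ * sqnorm (xp - x) ≤ 2 * (fs A b h x - fs A b h xp) := by
  have hle : μ / 2 * sqnorm (xp - x) ≤ ∑ k, 1 / 2 * (xp k - x k) ^ 2 * sqnorm (A k) := by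
    rw [sqnorm, mul_sum]
    refine sum_le_sum fun k _ => ?_
    rw [Pi.sub_apply]
    linarith [mul_le_mul_of_nonneg_left (hμ k) (sq_nonneg (xp k - x k))]
  linarith [hs.sum_sq_mul_sqnorm_le hh hx]

-- At the moment block `k` is minimized exactly the blocks `j > k` are still to be updated, so the
-- gradient at `xp` differs from the one seen by block `k` by row `k` of the truncated Gram matrix.
lemma fs_sub_le (hs : BCDStepS A b h X x xp) (hh : ∀ k, ConvexOn ℝ (X k) (h k))
    (hy : ∀ k, y k ∈ X k) :
    fs A b h xp - fs A b h y ≤ (xp - y) ⬝ᵥ strictUpper (columnGram A) *ᵥ (xp - x) := by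
  calc fs A b h xp - fs A b h y
      = gs A b xp - gs A b y + ∑ k, (h k (xp k) - h k (y k)) := by
        rw [fs, fs, sum_sub_distrib]
        ring
    _ ≤ (xp - y) ⬝ᵥ gradGs A b xp +
          ∑ k, (xp - y) k * -gradGs A b (sweep x xp (k + 1)) k :=
        add_le_add (gs_sub_le A b xp y) <| sum_le_sum fun k _ => by
          rw [Pi.sub_apply]
          linarith [hs.variational_inequality k (hh k) (hy k)]
    _ = (xp - y) ⬝ᵥ strictUpper (columnGram A) *ᵥ (xp - x) := by
        rw [dotProduct, dotProduct, ← sum_add_distrib]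
        refine sum_congr rfl fun k _ => ?_
        rw [strictUpper_mulVec_sub, ← gradGs_sub A b, Pi.sub_apply (gradGs A b xp)]
        ring

lemma sq_fs_sub_le (hs : BCDStepS A b h X x xp) (hh : ∀ k, ConvexOn ℝ (X k) (h k))
    (hx : ∀ k, x k ∈ X k) (hy : ∀ k, y k ∈ X k) (hle : fs A b h y ≤ fs A b h xp)
    {R μ : ℝ} (hR : Real.sqrt (sqnorm (xp - y)) ≤ R) (hμ0 : 0 < μ) (hμ : ∀ k, μ ≤ sqnorm (A k)) :
    (fs A b h xp - fs A b h y) ^ 2 ≤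
      2 * R ^ 2 * Real.log (2 * K) ^ 2 * (lamMaxS A ^ 2 / μ) *
        (fs A b h x - fs A b h xp) := by
  have hdist : sqnorm (xp - y) ≤ R ^ 2 := Real.sqrt_le_left ((Real.sqrt_nonneg _).trans hR) |>.mp hR
  have hmove : sqnorm (xp - x) ≤ 2 * (fs A b h x - fs A b h xp) / μ := by
    rw [le_div_iff₀' hμ0]
    exact hs.mul_sqnorm_sub_le hh hx hμ
  calc (fs A b h xp - fs A b h y) ^ 2
      ≤ ((xp - y) ⬝ᵥ strictUpper (columnGram A) *ᵥ (xp - x)) ^ 2 :=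
        pow_le_pow_left₀ (sub_nonneg.mpr hle) (hs.fs_sub_le hh hy) 2
    _ ≤ (Nat.clog 2 K * lamMaxS A / 2) ^ 2 * sqnorm (xp - y) * sqnorm (xp - x) := by
        simpa only [sqnorm_eq_dotProduct, Fintype.card_fin] using
          sq_dotProduct_strictUpper_mulVec_le (columnGram_posSemidef A)
            (dotProduct_columnGram_mulVec_le A) (xp - y) (xp - x)
    _ = (Nat.clog 2 K / 2 : ℝ) ^ 2 * lamMaxS A ^ 2 * sqnorm (xp - y) * sqnorm (xp - x) := by ring
    _ ≤ Real.log (2 * K) ^ 2 * lamMaxS A ^ 2 * R ^ 2 *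
          (2 * (fs A b h x - fs A b h xp) / μ) := by
        gcongr
        · exact sqnorm_nonneg _
        · exact sqnorm_nonneg _
        · exact clog_two_div_two_le_log K
    _ = _ := by ring

lemma mem {x : ℕ → Fin K → ℝ}
    (hstep : ∀ r, BCDStepS A b h X (x r) (x (r + 1))) (hx0 : ∀ k, x 0 k ∈ X k) :
    ∀ r k, x r k ∈ X k
  | 0 => hx0
  | r + 1 => fun k => (hstep r k).1

lemma antitone_fs {x : ℕ → Fin K → ℝ}
    (hstep : ∀ r, BCDStepS A b h X (x r) (x (r + 1)))
    (hh : ∀ k, ConvexOn ℝ (X k) (h k)) (hx0 : ∀ k, x 0 k ∈ X k) :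
    Antitone fun r => fs A b h (x r) :=
  antitone_nat_of_succ_le fun r => (hstep r).fs_le hh (mem hstep hx0 r)

end BCDStepS

lemma minOf_le {K : ℕ} (hK : 1 ≤ K) (P : Fin K → ℝ) (k : Fin K) : minOf hK P ≤ P k :=
  inf'_le P (mem_univ k)

lemma minOf_pos {K : ℕ} (hK : 1 ≤ K) {P : Fin K → ℝ} (hP : ∀ k, 0 < P k) : 0 < minOf hK P :=
  (lt_inf'_iff _).mpr fun k _ => hP k

lemma two_mul_max_div_le {a c c' : ℝ} (ha : 0 ≤ a) (hc : c ≤ c') (r : ℕ) :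
    2 * max a c / ((r + 1 : ℕ) + 2) ≤ 3 * max a c' / (r + 1) := by
  have : 0 ≤ max a c' := le_max_of_le_left ha
  gcongr ?_ * max a ?_ / ?_
  · norm_num
  · push_cast
    linarith

theorem bcd_rate_scalar_blocks_general {K M : ℕ} (hK : 1 ≤ K)
    (A : Fin K → Fin M → ℝ) (hA : ∀ k, A k ≠ 0) (b : Fin M → ℝ)
    (X : Fin K → Set ℝ) (h : Fin K → ℝ → ℝ) (hh : ∀ k, ConvexOn ℝ (X k) (h k))
    (x : ℕ → Fin K → ℝ) (hx0 : ∀ k, x 0 k ∈ X k)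
    (hstep : ∀ r, BCDStepS A b h X (x r) (x (r + 1)))
    (y : Fin K → ℝ) (hy : ∀ k, y k ∈ X k)
    (R : ℝ) (hR : ∀ z : Fin K → ℝ, (∀ k, z k ∈ X k) → fs A b h z ≤ fs A b h (x 0) →
      Real.sqrt (sqnorm (z - y)) ≤ R)
    (r : ℕ) :
    fs A b h (x r) - fs A b h y ≤
      2 * max (fs A b h (x 0) - fs A b h y)
          (2 * R ^ 2 * Real.log (2 * K) ^ 2 *
            (lamMaxS A ^ 2 / minOf hK (fun k => sqnorm (A k)))) /
        (r + 2) := by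
  set C := 2 * R ^ 2 * Real.log (2 * K) ^ 2 *
    (lamMaxS A ^ 2 / minOf hK (fun k => sqnorm (A k)))
  have hmin : 0 < minOf hK (fun k => sqnorm (A k)) := minOf_pos hK fun k => sqnorm_pos (hA k)
  have hC0 : 0 ≤ C := by positivity
  refine le_two_mul_div_of_sq_le_mul_sub (D := fun r => fs A b h (x r) - fs A b h y)
    (hC0.trans (le_max_right _ _)) (le_max_left _ _) (fun r hr => ?_) r
  have hmem := BCDStepS.mem hstep hx0
  have hanti := BCDStepS.antitone_fs hstep hh hx0
  calc (fs A b h (x (r + 1)) - fs A b h y) ^ 2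
      ≤ C * (fs A b h (x r) - fs A b h (x (r + 1))) :=
        (hstep r).sq_fs_sub_le hh (hmem r) hy (sub_nonneg.mp hr)
          (hR _ (hmem (r + 1)) (hanti (r + 1).zero_le)) hmin (minOf_le hK _)
    _ ≤ max (fs A b h (x 0) - fs A b h y) C * (fs A b h (x r) - fs A b h (x (r + 1))) :=
        mul_le_mul_of_nonneg_right (le_max_right _ _) (sub_nonneg.mpr (hanti r.le_succ))
    _ = _ := by ring

/-- iteration complexity of cyclic exact BCD with scalar blocks
(`N = 1`, each `A_k ∈ ℝ^M` nonzero, so `L_k = ‖A_k‖²`):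
`Δ^{(r+1)} ≤ 3 max{Δ^{(0)}, 2 R_0² log²(2K)(L²/L_min + L_max²/L_min)}/(r+1)`. -/
theorem bcd_rate_scalar_blocks {K M : ℕ} (hK1 : 1 ≤ K) (hK : 3 ≤ K) (hM : 1 ≤ M)
    (A : Fin K → Fin M → ℝ) (hA : ∀ k, A k ≠ 0) (b : Fin M → ℝ)
    (X : Fin K → Set ℝ) (h : Fin K → ℝ → ℝ)
    (hXne : ∀ k, (X k).Nonempty) (hXcl : ∀ k, IsClosed (X k))
    (hXcv : ∀ k, Convex ℝ (X k))
    (hhcv : ∀ k, ConvexOn ℝ Set.univ (h k))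
    (hhlsc : ∀ k, LowerSemicontinuous (h k))
    (x : ℕ → Fin K → ℝ) (hx0 : ∀ k, x 0 k ∈ X k)
    (hstep : ∀ r : ℕ, BCDStepS A b h X (x r) (x (r + 1)))
    (xstar : Fin K → ℝ) (hxstarX : ∀ k, xstar k ∈ X k)
    (hxstar : ∀ y : Fin K → ℝ, (∀ k, y k ∈ X k) → fs A b h xstar ≤ fs A b h y)
    (R0 : ℝ)
    (hR0 : ∀ z : Fin K → ℝ, (∀ k, z k ∈ X k) → fs A b h z ≤ fs A b h (x 0) →
      ∀ y : Fin K → ℝ, (∀ k, y k ∈ X k) →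
        (∀ z' : Fin K → ℝ, (∀ k, z' k ∈ X k) → fs A b h y ≤ fs A b h z') →
        Real.sqrt (sqnorm (z - y)) ≤ R0)
    (r : ℕ) :
    fs A b h (x (r + 1)) - fs A b h xstar ≤
      3 * max (fs A b h (x 0) - fs A b h xstar)
          (2 * R0 ^ 2 * Real.log (2 * (K : ℝ)) ^ 2 *
            (lamMaxS A ^ 2 / minOf hK1 (fun k => sqnorm (A k)) +
              maxOf hK1 (fun k => sqnorm (A k)) ^ 2 /
                minOf hK1 (fun k => sqnorm (A k)))) /
        (r + 1) := by
  refine (bcd_rate_scalar_blocks_general hK1 A hA b X h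
    (fun k => (hhcv k).subset (Set.subset_univ _) (hXcv k)) x hx0 hstep xstar hxstarX R0
    (fun z hz hle => hR0 z hz hle xstar hxstarX hxstar) (r + 1)).trans
    (two_mul_max_div_le (sub_nonneg.mpr (hxstar (x 0) hx0)) ?_ r)
  have hmin : 0 < minOf hK1 (fun k => sqnorm (A k)) := minOf_pos hK1 fun k => sqnorm_pos (hA k)
  gcongr
  exact le_add_of_nonneg_right (by positivity)
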